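/- arXiv:2102.12192 — 3 statements merged into one kernel-verified Lean document; each statement's English description precedes it below -/
import Mathlib

section
/- Let N ≥ 1, η > 0, and let L, ℓ ∈ ℝ^N be vectors. Define the exponential-weights distributions p_i = exp(−η L_i) / Σ_{j=1}^N exp(−η L_j) and q_i = exp(−η (L_i + ℓ_i)) / Σ_{j=1}^N exp(−η (L_j + ℓ_j)). Then Σ_{i=1}^N q_i ℓ_i ≤ Σ_{i=1}^N p_i ℓ_i. (This is the key FTRL-optimality inequality showing the multiplicative-weights update cannot increase the weighted value of the most recent loss vector.) -/
open Real Finset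

/-!
Up to normalization, `q i` is `p i` multiplied by `exp (-η * ℓ i)`, a decreasing function of the
loss `ℓ i`. Weighted by `p`, the loss and this factor are therefore negatively correlated
(Chebyshev's sum inequality with weights), so the reweighting lowers the mean loss.
-/

section Chebyshev

variable {ι R : Type*}

theorem sum_sum_mul_sub_mul_sub [CommRing R] (s : Finset ι) (w f g : ι → R) :
    ∑ i ∈ s, ∑ j ∈ s, w i * w j * ((f i - f j) * (g i - g j)) =
      2 * ((∑ i ∈ s, w i) * ∑ i ∈ s, w i * (f i * g i) -
        (∑ i ∈ s, w i * f i) * ∑ i ∈ s, w i * g i) := by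
  have expand (i j : ι) : w i * w j * ((f i - f j) * (g i - g j)) =
      w i * (f i * g i) * w j + w i * (w j * (f j * g j)) -
        (w i * f i * (w j * g j) + w i * g i * (w j * f j)) := by
    ring
  simp only [expand, sum_sub_distrib, sum_add_distrib, ← sum_mul_sum]
  ring

theorem sum_mul_sum_mul_mul_le_of_antivaryOn [CommRing R] [LinearOrder R] [IsStrictOrderedRing R]
    {s : Finset ι} {w f g : ι → R} (hw : ∀ i ∈ s, 0 ≤ w i) (hfg : AntivaryOn f g s) :
    (∑ i ∈ s, w i) * ∑ i ∈ s, w i * (f i * g i) ≤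
      (∑ i ∈ s, w i * f i) * ∑ i ∈ s, w i * g i := by
  have double_sum_nonpos :
      ∑ i ∈ s, ∑ j ∈ s, w i * w j * ((f i - f j) * (g i - g j)) ≤ 0 :=
    sum_nonpos fun i hi ↦ sum_nonpos fun j hj ↦
      mul_nonpos_of_nonneg_of_nonpos (mul_nonneg (hw i hi) (hw j hj))
        (hfg.sub_mul_sub_nonpos hj hi)
  rw [sum_sum_mul_sub_mul_sub] at double_sum_nonpos
  linarith

theorem centerMass_mul_le_centerMass_of_antivaryOn [Field R] [LinearOrder R]
    [IsStrictOrderedRing R] {s : Finset ι} {w k f : ι → R} (hw : ∀ i ∈ s, 0 ≤ w i)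
    (hwk : 0 < ∑ i ∈ s, w i * k i) (hfk : AntivaryOn f k s) :
    s.centerMass (fun i ↦ w i * k i) f ≤ s.centerMass w f := by
  have hw_sum : 0 < ∑ i ∈ s, w i := by
    obtain ⟨i, hi, hne⟩ := exists_ne_zero_of_sum_ne_zero hwk.ne'
    exact sum_pos' hw ⟨i, hi, (hw i hi).lt_of_ne' (left_ne_zero_of_mul hne)⟩
  simp only [centerMass, smul_eq_mul, inv_mul_eq_div]
  rw [div_le_div_iff₀ hwk hw_sum]
  calc (∑ i ∈ s, w i * k i * f i) * ∑ i ∈ s, w i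
      = (∑ i ∈ s, w i) * ∑ i ∈ s, w i * (f i * k i) := by
        simp only [mul_comm, mul_left_comm]
    _ ≤ (∑ i ∈ s, w i * f i) * ∑ i ∈ s, w i * k i :=
        sum_mul_sum_mul_mul_le_of_antivaryOn hw hfk

end Chebyshev

section ExpWeights

theorem antivary_exp_neg_mul {ι : Type*} {η : ℝ} (hη : 0 ≤ η) (f : ι → ℝ) :
    Antivary f fun i ↦ exp (-η * f i) := by
  have exp_antitone : Antitone fun x ↦ exp (-η * x) := fun _ _ hxy ↦
    exp_le_exp.2 (mul_le_mul_of_nonpos_left hxy (neg_nonpos.2 hη))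
  exact ((monovary_self f).comp_antitone_left exp_antitone).symm

variable {ι : Type*} [Fintype ι]

/-- The exponential-weights (multiplicative-weights) distribution with learning rate `η` for the
cumulative loss vector `L`. -/
noncomputable def expWeights (η : ℝ) (L : ι → ℝ) (i : ι) : ℝ :=
  exp (-η * L i) / ∑ j, exp (-η * L j)

theorem sum_expWeights_mul_eq_centerMass (η : ℝ) (L f : ι → ℝ) :
    ∑ i, expWeights η L i * f i = univ.centerMass (fun i ↦ exp (-η * L i)) f := by
  simp only [expWeights, centerMass, smul_eq_mul, mul_sum, div_eq_inv_mul, mul_assoc]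

theorem exp_weights_ftrl_optimality_general {η : ℝ} (hη : 0 ≤ η) (L ℓ : ι → ℝ) :
    ∑ i, expWeights η (L + ℓ) i * ℓ i ≤ ∑ i, expWeights η L i * ℓ i := by
  cases isEmpty_or_nonempty ι
  · simp only [univ_eq_empty, sum_empty, le_refl]
  have exp_add_loss (i : ι) :
      exp (-η * (L + ℓ) i) = exp (-η * L i) * exp (-η * ℓ i) := by
    rw [Pi.add_apply, mul_add, exp_add]
  simp only [sum_expWeights_mul_eq_centerMass, exp_add_loss]
  exact centerMass_mul_le_centerMass_of_antivaryOn (fun i _ ↦ (exp_pos _).le) (by positivity)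
    ((antivary_exp_neg_mul hη ℓ).antivaryOn _)

end ExpWeights

/-- FTRL-optimality inequality for the exponential-weights update:
updating the exponential-weights distribution with the most recent loss vector
cannot increase the weighted value of that loss vector. -/
theorem exp_weights_ftrl_optimality
    {N : ℕ} (hN : 1 ≤ N) (η : ℝ) (hη : 0 < η)
    (L ℓ : Fin N → ℝ) (p q : Fin N → ℝ)
    (hp : ∀ i, p i = Real.exp (-η * L i) / ∑ j, Real.exp (-η * L j))
    (hq : ∀ i, q i = Real.exp (-η * (L i + ℓ i)) / ∑ j, Real.exp (-η * (L j + ℓ j))) :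
    ∑ i, q i * ℓ i ≤ ∑ i, p i * ℓ i := by
  rw [funext hp, funext hq]
  exact exp_weights_ftrl_optimality_general hη.le L ℓ
end

section
/- In the noisy logistic MR-GD dynamics with step sizes η = α = 1 and θ_0 = 0, for every ε > 0 there exists a natural number t with t ≥ max{ −log(1/2)/Δ + 2, ( −log(exp(ε) − 1) / (exp(−ε)(exp(ε) − 1)) ) · (2N/σ) } such that the clean loss satisfies L(θ_t) = log(1 + exp(−θ_t)) ≤ ε. -/
open Real Finset

/-!
Passing from clean to corrupted loss changes the sign of `θ`, so that `b_t = a_t exp (-η ∑ θ_s)`.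
Hence as long as `0 ≤ θ_t ≤ η ∑_{s ≤ t} θ_s`, we have `b_t exp θ_t ≤ a_t`, and the gradient update
is at least `α (1 - 2σ) / (1 + exp θ_t) > 0`. For `η ≥ 1` this increase reproduces the two
inequalities at the next step, so they hold along the whole trajectory. A real sequence whose
increments are bounded below by a positive antitone function of its current value is unbounded;
therefore `θ_t → ∞`, and the clean loss tends to `0`.
-/

open Filter Topology

theorem tendsto_atTop_of_add_antitone_le {R : Type*} [AddCommGroup R] [LinearOrder R]
    [IsOrderedAddMonoid R] [Archimedean R] {u : ℕ → R} {f : R → R} (hf : Antitone f)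
    (hf_pos : ∀ x, 0 < f x) (hu : ∀ n, u n + f (u n) ≤ u (n + 1)) :
    Tendsto u atTop atTop := by
  have u_mono : Monotone u :=
    monotone_nat_of_le_succ fun n => (le_add_of_nonneg_right (hf_pos _).le).trans (hu n)
  refine tendsto_atTop_atTop_of_monotone u_mono fun M => ?_
  by_contra! u_lt
  have linear_growth : ∀ n : ℕ, u 0 + n • f M ≤ u n := by
    intro n
    induction n with
    | zero => simp
    | succ n ih =>
      calc u 0 + (n + 1) • f M = u 0 + n • f M + f M := by rw [succ_nsmul, add_assoc]
        _ ≤ u n + f (u n) := add_le_add ih (hf (u_lt n).le)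
        _ ≤ u (n + 1) := hu n
  obtain ⟨n, hn⟩ := Archimedean.arch (M - u 0) (hf_pos M)
  exact (u_lt n).not_ge ((sub_le_iff_le_add'.1 hn).trans (linear_growth n))

theorem log_one_add_exp_eq_add (x : ℝ) : log (1 + exp x) = log (1 + exp (-x)) + x := by
  have factor : 1 + exp x = (1 + exp (-x)) * exp x := by
    rw [add_mul, ← exp_add, neg_add_cancel, exp_zero, one_mul, add_comm]
  rw [factor, log_mul (by positivity) (exp_ne_zero x), log_exp]

theorem tendsto_log_one_add_exp_neg_atTop :
    Tendsto (fun x : ℝ => log (1 + exp (-x))) atTop (𝓝 0) := by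
  have h : Tendsto (fun x : ℝ => 1 + exp (-x)) atTop (𝓝 1) := by
    simpa using tendsto_exp_neg_atTop_nhds_zero.const_add 1
  simpa using h.log one_ne_zero

theorem div_one_add_exp_sub_div_one_add_exp_neg (p q x : ℝ) :
    p / (1 + exp x) - q / (1 + exp (-x)) = (p - q * exp x) / (1 + exp x) := by
  rw [exp_neg]
  field_simp
  ring

/-- The probability mass `P_cl` of the clean examples, a fraction `1 - σ` of the data, when each of
them has weight `a` and each corrupted one has weight `b`. -/
noncomputable def cleanMass (σ a b : ℝ) : ℝ :=
  (1 - σ) * a / ((1 - σ) * a + σ * b)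

/-- The probability mass `P_cr` of the corrupted examples, a fraction `σ` of the data, when each of
them has weight `b` and each clean one has weight `a`. -/
noncomputable def corruptedMass (σ a b : ℝ) : ℝ :=
  σ * b / ((1 - σ) * a + σ * b)

theorem one_sub_two_mul_le_cleanMass_sub_corruptedMass_mul {σ a b r : ℝ} (hσ0 : 0 ≤ σ)
    (hσ : σ ≤ 1 / 2) (ha : 0 < a) (hb : 0 ≤ b) (hr : 1 ≤ r) (hbr : b * r ≤ a) :
    1 - 2 * σ ≤ cleanMass σ a b - corruptedMass σ a b * r := by
  have hba : b ≤ a := (le_mul_of_one_le_right hb hr).trans hbr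
  have total_pos : 0 < (1 - σ) * a + σ * b :=
    add_pos_of_pos_of_nonneg (mul_pos (by linarith) ha) (mul_nonneg hσ0 hb)
  have total_le : (1 - σ) * a + σ * b ≤ a := by
    linarith [mul_le_mul_of_nonneg_left hba hσ0]
  rw [cleanMass, corruptedMass, div_mul_eq_mul_div, ← sub_div, le_div_iff₀ total_pos]
  calc (1 - 2 * σ) * ((1 - σ) * a + σ * b)
      ≤ (1 - 2 * σ) * a := mul_le_mul_of_nonneg_left total_le (by linarith)
    _ = (1 - σ) * a - σ * a := by ring
    _ ≤ (1 - σ) * a - σ * (b * r) := by gcongr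
    _ = (1 - σ) * a - σ * b * r := by ring

/-- The noisy logistic MR-GD dynamics with corruption fraction `σ`, reweighting step size `η` and
gradient step size `α`, started at `θ 0 = 0`. Here `a t` and `b t` are the cumulative weights of a
clean and of a corrupted example; the loss at `θ 0` does not enter them. -/
structure IsNoisyLogisticMRGD (σ η α : ℝ) (θ a b : ℕ → ℝ) : Prop where
  cleanWeight_eq : ∀ t, a t = exp (-η * ∑ s ∈ Icc 1 t, log (1 + exp (-θ s)))
  corruptedWeight_eq : ∀ t, b t = exp (-η * ∑ s ∈ Icc 1 t, log (1 + exp (θ s)))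
  zero : θ 0 = 0
  succ : ∀ t, θ (t + 1) = θ t +
    α * (cleanMass σ (a t) (b t) / (1 + exp (θ t)) -
      corruptedMass σ (a t) (b t) / (1 + exp (-θ t)))

namespace IsNoisyLogisticMRGD

variable {σ η α : ℝ} {θ a b : ℕ → ℝ}

theorem cleanWeight_pos (h : IsNoisyLogisticMRGD σ η α θ a b) (t : ℕ) : 0 < a t :=
  h.cleanWeight_eq t ▸ exp_pos _

theorem corruptedWeight_pos (h : IsNoisyLogisticMRGD σ η α θ a b) (t : ℕ) : 0 < b t :=
  h.corruptedWeight_eq t ▸ exp_pos _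

theorem corruptedWeight_eq_cleanWeight_mul_exp (h : IsNoisyLogisticMRGD σ η α θ a b) (t : ℕ) :
    b t = a t * exp (-(η * ∑ s ∈ Icc 1 t, θ s)) := by
  rw [h.cleanWeight_eq, h.corruptedWeight_eq, ← exp_add,
    sum_congr rfl fun s _ => log_one_add_exp_eq_add (θ s), sum_add_distrib]
  ring_nf

theorem corruptedWeight_mul_exp_le (h : IsNoisyLogisticMRGD σ η α θ a b) {t : ℕ}
    (hsum : θ t ≤ η * ∑ s ∈ Icc 1 t, θ s) : b t * exp (θ t) ≤ a t := by
  rw [h.corruptedWeight_eq_cleanWeight_mul_exp, mul_assoc, ← exp_add]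
  exact mul_le_of_le_one_right (h.cleanWeight_pos t).le (exp_le_one_iff.2 (by linarith))

theorem add_le_succ (h : IsNoisyLogisticMRGD σ η α θ a b) (hσ0 : 0 ≤ σ) (hσ : σ ≤ 1 / 2)
    (hα : 0 ≤ α) {t : ℕ} (hθ : 0 ≤ θ t) (hsum : θ t ≤ η * ∑ s ∈ Icc 1 t, θ s) :
    θ t + α * ((1 - 2 * σ) / (1 + exp (θ t))) ≤ θ (t + 1) := by
  rw [h.succ t, div_one_add_exp_sub_div_one_add_exp_neg]
  gcongr θ t + α * (?_ / (1 + exp (θ t)))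
  exact one_sub_two_mul_le_cleanMass_sub_corruptedMass_mul hσ0 hσ (h.cleanWeight_pos t)
    (h.corruptedWeight_pos t).le (one_le_exp hθ) (h.corruptedWeight_mul_exp_le hsum)

theorem nonneg_and_le_mul_sum (h : IsNoisyLogisticMRGD σ η α θ a b) (hσ0 : 0 ≤ σ)
    (hσ : σ ≤ 1 / 2) (hη : 1 ≤ η) (hα : 0 ≤ α) (t : ℕ) :
    0 ≤ θ t ∧ θ t ≤ η * ∑ s ∈ Icc 1 t, θ s := by
  induction t with
  | zero => simp [h.zero]
  | succ t ih =>
    obtain ⟨hθ, hsum⟩ := ih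
    have increment_nonneg : 0 ≤ α * ((1 - 2 * σ) / (1 + exp (θ t))) :=
      mul_nonneg hα (div_nonneg (by linarith) (by positivity))
    have hθ' : 0 ≤ θ (t + 1) := by linarith [h.add_le_succ hσ0 hσ hα hθ hsum]
    refine ⟨hθ', ?_⟩
    calc θ (t + 1) ≤ η * θ (t + 1) := le_mul_of_one_le_left hθ' hη
      _ ≤ η * ∑ s ∈ Icc 1 t, θ s + η * θ (t + 1) := le_add_of_nonneg_left (hθ.trans hsum)
      _ = η * ∑ s ∈ Icc 1 (t + 1), θ s := by
        rw [sum_Icc_succ_top (Nat.le_add_left 1 t), mul_add]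

theorem tendsto_atTop (h : IsNoisyLogisticMRGD σ η α θ a b) (hσ0 : 0 ≤ σ) (hσ : σ < 1 / 2)
    (hη : 1 ≤ η) (hα : 0 < α) : Tendsto θ atTop atTop := by
  have margin_pos : 0 < 1 - 2 * σ := by linarith
  refine tendsto_atTop_of_add_antitone_le (f := fun x => α * ((1 - 2 * σ) / (1 + exp x)))
    (fun x y hxy => ?_) (fun x => by positivity) fun t => ?_
  · dsimp only
    gcongr
  · obtain ⟨hθ, hsum⟩ := h.nonneg_and_le_mul_sum hσ0 hσ.le hη hα.le t
    exact h.add_le_succ hσ0 hσ.le hα.le hθ hsum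

end IsNoisyLogisticMRGD

theorem mr_gd_noisy_logistic_clean_loss_general {σ η α : ℝ} {θ a b : ℕ → ℝ}
    (h : IsNoisyLogisticMRGD σ η α θ a b) (hσ0 : 0 ≤ σ) (hσ : σ < 1 / 2) (hη : 1 ≤ η)
    (hα : 0 < α) : Tendsto (fun t => log (1 + exp (-θ t))) atTop (𝓝 0) :=
  tendsto_log_one_add_exp_neg_atTop.comp (h.tendsto_atTop hσ0 hσ hη hα)

/-- In the noisy logistic MR-GD dynamics (step sizes η = α = 1,
θ₀ = 0, corruption fraction σ = 1/2 − Δ with 0 < Δ < 1/2), for every ε > 0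
there is a time t ≥ max{−log(1/2)/Δ + 2, (−log(exp(ε) − 1)/(exp(−ε)(exp(ε) − 1))) · (2N/σ)}
at which the clean loss L(θ_t) = log(1 + exp(−θ_t)) is at most ε
(Theorem 3 of the paper). -/
theorem mr_gd_noisy_logistic_clean_loss
    (Δ : ℝ) (hΔ0 : 0 < Δ) (hΔ : Δ < 1 / 2)
    (σ : ℝ) (hσ : σ = 1 / 2 - Δ)
    (N : ℕ) (hN : 1 ≤ N) (hσN : ∃ m : ℕ, 0 < m ∧ (m : ℝ) = σ * N)
    (θ a b : ℕ → ℝ)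
    (ha : ∀ t, a t = Real.exp (-(1 : ℝ) * ∑ s ∈ Finset.Icc 1 t, Real.log (1 + Real.exp (-θ s))))
    (hb : ∀ t, b t = Real.exp (-(1 : ℝ) * ∑ s ∈ Finset.Icc 1 t, Real.log (1 + Real.exp (θ s))))
    (hθ0 : θ 0 = 0)
    (hθ : ∀ t, θ (t + 1) = θ t +
      (1 : ℝ) * (((1 - σ) * a t / ((1 - σ) * a t + σ * b t)) / (1 + Real.exp (θ t)) -
        (σ * b t / ((1 - σ) * a t + σ * b t)) / (1 + Real.exp (-θ t)))) :
    ∀ ε > (0 : ℝ), ∃ t : ℕ,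
      (t : ℝ) ≥ max (-Real.log (1 / 2) / Δ + 2)
        ((-Real.log (Real.exp ε - 1) / (Real.exp (-ε) * (Real.exp ε - 1))) * (2 * N / σ)) ∧
      Real.log (1 + Real.exp (-θ t)) ≤ ε := by
  intro ε hε
  have loss_tendsto := mr_gd_noisy_logistic_clean_loss_general ⟨ha, hb, hθ0, hθ⟩
    (by linarith) (by linarith) le_rfl one_pos
  exact ((tendsto_natCast_atTop_atTop.eventually_ge_atTop _).and
    (loss_tendsto.eventually_le_const hε)).exists
end

section
/- In the noisy linear MR-LS dynamics, for every t ≥ 0 and every clean index i ∉ I_cr it holds that p_{t,i} ≥ 1 / ( (1 − σ) N + σ N exp(−η ε² Δ t) ). In particular, the probability of each clean example is at least 1/N and increases toward 1/((1 − σ)N). -/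
open Real Finset

/-! The sign `x i` can be absorbed into the noise: with `u i = x i • e i`, the error
`a t = θ t - θ₀` is the weighted mean `∑ i, p t i • u i`, and the loss of example `i` is
`‖a t - u i‖² / 2`. As long as every clean example has weight at least `1 / N`, the corrupted ones
have total weight at most `σ = 1 / 2 - Δ`, so `‖a t‖ ≤ σ ε`. Since `‖u i‖ = ε` on corrupted
examples and `u i = 0` on clean ones, the loss of a corrupted example then exceeds that of a clean
one by at least `ε² / 2 - σ ε² = ε² Δ`. Hence the clean examples keep the least cumulative loss, so
that their weights stay above `1 / N`, and after `t` rounds the gap is at least `ε² Δ t`. -/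

section GibbsWeight

variable {ι : Type*} [Fintype ι] {η g : ℝ} {L : ι → ℝ} {i : ι}

/-- The probability vector proportional to `exp (-η * L i)`: the multiplicative-weights
distribution with step size `η` on examples with cumulative losses `L`. -/
noncomputable def gibbsWeight (η : ℝ) (L : ι → ℝ) (i : ι) : ℝ :=
  exp (-η * L i) / ∑ j, exp (-η * L j)

theorem gibbsWeight_nonneg (η : ℝ) (L : ι → ℝ) (i : ι) : 0 ≤ gibbsWeight η L i := by
  unfold gibbsWeight
  positivity

theorem sum_gibbsWeight [Nonempty ι] (η : ℝ) (L : ι → ℝ) : ∑ i, gibbsWeight η L i = 1 := by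
  have hZ : 0 < ∑ j, exp (-η * L j) := sum_pos (fun _ _ => exp_pos _) univ_nonempty
  simp only [gibbsWeight, ← sum_div, div_self hZ.ne']

theorem gibbsWeight_zero (η : ℝ) (i : ι) : gibbsWeight η 0 i = 1 / Fintype.card ι := by
  simp [gibbsWeight]

theorem gibbsWeight_eq_one_div_sum (η : ℝ) (L : ι → ℝ) (i : ι) :
    gibbsWeight η L i = 1 / ∑ j, exp (-(η * (L j - L i))) := by
  have hterm (j : ι) : exp (-(η * (L j - L i))) = exp (-η * L j) / exp (-η * L i) := by
    rw [← exp_sub]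
    ring_nf
  simp only [hterm, ← sum_div, one_div_div, gibbsWeight]

theorem one_div_le_gibbsWeight_of_gap [DecidableEq ι] {S : Finset ι} (hη : 0 ≤ η)
    (hcompl : ∀ j ∉ S, L i ≤ L j) (hgap : ∀ j ∈ S, L i + g ≤ L j) :
    1 / (#Sᶜ + #S * exp (-(η * g))) ≤ gibbsWeight η L i := by
  rw [gibbsWeight_eq_one_div_sum]
  have hpos : 0 < ∑ j, exp (-(η * (L j - L i))) :=
    sum_pos (fun _ _ => exp_pos _) ⟨i, mem_univ i⟩
  refine one_div_le_one_div_of_le hpos ?_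
  have hS : ∑ j ∈ S, exp (-(η * (L j - L i))) ≤ #S * exp (-(η * g)) := by
    rw [← nsmul_eq_mul]
    refine sum_le_card_nsmul _ _ _ fun j hj => ?_
    gcongr
    linarith [hgap j hj]
  have hSc : ∑ j ∈ Sᶜ, exp (-(η * (L j - L i))) ≤ #Sᶜ := by
    rw [← nsmul_one]
    refine sum_le_card_nsmul _ _ _ fun j hj => exp_le_one_iff.2 <| neg_nonpos.2 ?_
    exact mul_nonneg hη (sub_nonneg.2 (hcompl j (mem_compl.1 hj)))
  rw [← sum_compl_add_sum S]
  exact add_le_add hSc hS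

theorem one_div_card_le_gibbsWeight (hη : 0 ≤ η) (hL : ∀ j, L i ≤ L j) :
    1 / (Fintype.card ι : ℝ) ≤ gibbsWeight η L i := by
  classical
  simpa using one_div_le_gibbsWeight_of_gap (S := ∅) (g := 0) hη (fun j _ => hL j) (by simp)

end GibbsWeight

section WeightedMean

variable {ι E : Type*} [Fintype ι]

theorem sum_le_card_div_card [Nonempty ι] {S : Finset ι} {p : ι → ℝ} (hp : ∑ i, p i = 1)
    (hS : ∀ i ∉ S, 1 / (Fintype.card ι : ℝ) ≤ p i) :
    ∑ i ∈ S, p i ≤ #S / Fintype.card ι := by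
  classical
  have hcompl : #Sᶜ / (Fintype.card ι : ℝ) ≤ ∑ i ∈ Sᶜ, p i := by
    rw [div_eq_mul_one_div, ← nsmul_eq_mul]
    exact card_nsmul_le_sum _ _ _ fun i hi => hS i (mem_compl.1 hi)
  have hcard : (#S / Fintype.card ι + #Sᶜ / Fintype.card ι : ℝ) = 1 := by
    rw [← add_div, ← Nat.cast_add, card_add_card_compl]
    exact div_self (Nat.cast_ne_zero.2 Fintype.card_ne_zero)
  linarith [sum_add_sum_compl S p]

theorem norm_sum_smul_le_of_eq_zero [SeminormedAddCommGroup E] [NormedSpace ℝ E] {S : Finset ι}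
    {p : ι → ℝ} {u : ι → E} {ε : ℝ} (hp : ∀ i ∈ S, 0 ≤ p i) (hu : ∀ i ∈ S, ‖u i‖ ≤ ε)
    (hu₀ : ∀ i ∉ S, u i = 0) :
    ‖∑ i, p i • u i‖ ≤ (∑ i ∈ S, p i) * ε := by
  rw [← sum_subset S.subset_univ fun i _ hi => by rw [hu₀ i hi, smul_zero], sum_mul]
  refine norm_sum_le_of_le _ fun i hi => ?_
  rw [norm_smul, Real.norm_of_nonneg (hp i hi)]
  exact mul_le_mul_of_nonneg_left (hu i hi) (hp i hi)

end WeightedMean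

theorem half_norm_sq_add_le_half_norm_sub_sq {E : Type*} [SeminormedAddCommGroup E]
    [InnerProductSpace ℝ E] {a u : E} {Δ : ℝ} (ha : ‖a‖ ≤ (1 / 2 - Δ) * ‖u‖) :
    1 / 2 * ‖a‖ ^ 2 + ‖u‖ ^ 2 * Δ ≤ 1 / 2 * ‖a - u‖ ^ 2 := by
  have hinner : inner ℝ a u ≤ (1 / 2 - Δ) * ‖u‖ * ‖u‖ :=
    (real_inner_le_norm a u).trans (mul_le_mul_of_nonneg_right ha (norm_nonneg u))
  rw [norm_sub_sq_real]
  linarith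

theorem norm_smul_sub_smul_add {E : Type*} [SeminormedAddCommGroup E] [NormedSpace ℝ E] {c : ℝ}
    (hc : |c| = 1) (v w u : E) : ‖c • v - (c • w + u)‖ = ‖v - w - c • u‖ := by
  have hcc : c * c = 1 := by rw [← abs_mul_abs_self, hc, one_mul]
  calc ‖c • v - (c • w + u)‖ = ‖c • (v - w - c • u)‖ := by
        rw [smul_sub, smul_sub, smul_smul, hcc, one_smul, sub_sub]
    _ = ‖v - w - c • u‖ := by rw [norm_smul, Real.norm_eq_abs, hc, one_mul]

section MRLS

variable {ι E : Type*} [SeminormedAddCommGroup E]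

/-- The sum of the squared losses of example `i`, with covariate `x i` and observed label `z i`,
at the iterates `θ 0, …, θ (t - 1)`. -/
noncomputable def cumulativeLoss [NormedSpace ℝ E] (x : ι → ℝ) (z : ι → E) (θ : ℕ → E) (t : ℕ)
    (i : ι) : ℝ :=
  ∑ s ∈ range t, 1 / 2 * ‖x i • θ s - z i‖ ^ 2

/-- The MR-LS dynamics with scalar covariates `x` and observed labels `z` in `E`: multiplicative
weights `p` with step size `η` on the cumulative losses of the weighted least-squares iterates `θ`.
The formula for `θ t` is the least-squares solution only for unit covariates, `|x i| = 1`. The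
uniform initial weights are the case `t = 0` of `weight_eq`. -/
structure IsMRLS [Fintype ι] [NormedSpace ℝ E] (η : ℝ) (x : ι → ℝ) (z : ι → E)
    (p : ℕ → ι → ℝ) (θ : ℕ → E) : Prop where
  weight_eq : ∀ t i, p t i = gibbsWeight η (cumulativeLoss x z θ t) i
  iterate_eq : ∀ t, θ t = ∑ i, p t i • x i • z i

variable {η ε Δ σ : ℝ} {S : Finset ι} {x : ι → ℝ} {z e : ι → E} {p : ℕ → ι → ℝ} {θ : ℕ → E}
  {θ₀ : E} {t : ℕ} {i j : ι}

theorem cumulativeLoss_eq_sum_norm_error_sub [NormedSpace ℝ E] (hx : |x i| = 1)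
    (hz : z i = x i • θ₀ + e i) :
    cumulativeLoss x z θ t i = ∑ s ∈ range t, 1 / 2 * ‖θ s - θ₀ - x i • e i‖ ^ 2 := by
  simp only [cumulativeLoss, hz, norm_smul_sub_smul_add hx]

theorem cumulativeLoss_of_label_eq [NormedSpace ℝ E] (hx : |x i| = 1) (hz : z i = x i • θ₀) :
    cumulativeLoss x z θ t i = ∑ s ∈ range t, 1 / 2 * ‖θ s - θ₀‖ ^ 2 := by
  rw [cumulativeLoss_eq_sum_norm_error_sub (e := 0) hx (by simpa using hz)]
  simp

theorem cumulativeLoss_eq_cumulativeLoss [NormedSpace ℝ E] (hxi : |x i| = 1) (hxj : |x j| = 1)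
    (hzi : z i = x i • θ₀) (hzj : z j = x j • θ₀) :
    cumulativeLoss x z θ t i = cumulativeLoss x z θ t j := by
  rw [cumulativeLoss_of_label_eq hxi hzi, cumulativeLoss_of_label_eq hxj hzj]

theorem cumulativeLoss_add_le_cumulativeLoss [InnerProductSpace ℝ E] (hxi : |x i| = 1)
    (hxj : |x j| = 1) (hzi : z i = x i • θ₀) (hzj : z j = x j • θ₀ + e j)
    (hθ : ∀ s < t, ‖θ s - θ₀‖ ≤ (1 / 2 - Δ) * ‖e j‖) :
    cumulativeLoss x z θ t i + ‖e j‖ ^ 2 * Δ * t ≤ cumulativeLoss x z θ t j := by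
  have hnorm : ‖x j • e j‖ = ‖e j‖ := by rw [norm_smul, Real.norm_eq_abs, hxj, one_mul]
  calc cumulativeLoss x z θ t i + ‖e j‖ ^ 2 * Δ * t
      = ∑ s ∈ range t, (1 / 2 * ‖θ s - θ₀‖ ^ 2 + ‖x j • e j‖ ^ 2 * Δ) := by
        rw [cumulativeLoss_of_label_eq hxi hzi, sum_add_distrib, sum_const, card_range,
          nsmul_eq_mul, hnorm, mul_comm (t : ℝ)]
    _ ≤ ∑ s ∈ range t, 1 / 2 * ‖θ s - θ₀ - x j • e j‖ ^ 2 := by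
        refine sum_le_sum fun s hs => half_norm_sq_add_le_half_norm_sub_sq ?_
        rw [hnorm]
        exact hθ s (mem_range.1 hs)
    _ = cumulativeLoss x z θ t j := (cumulativeLoss_eq_sum_norm_error_sub hxj hzj).symm

namespace IsMRLS

variable [Fintype ι]

theorem of_real {z : ι → ℝ} {θ : ℕ → ℝ} (hp0 : ∀ i, p 0 i = 1 / Fintype.card ι)
    (hθ : ∀ t, θ t = ∑ i, p t i * x i * z i)
    (hp : ∀ t i, p (t + 1) i = exp (-η * ∑ s ∈ range (t + 1), 1 / 2 * (θ s * x i - z i) ^ 2) /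
      ∑ j, exp (-η * ∑ s ∈ range (t + 1), 1 / 2 * (θ s * x j - z j) ^ 2)) :
    IsMRLS η x z p θ where
  weight_eq
    | 0, i => (hp0 i).trans (gibbsWeight_zero η i).symm
    | t + 1, i => by
      simp only [hp, gibbsWeight, cumulativeLoss, smul_eq_mul, Real.norm_eq_abs, sq_abs,
        mul_comm (x _)]
  iterate_eq t := by simp only [hθ, smul_eq_mul, mul_assoc]

theorem sum_weight [NormedSpace ℝ E] [Nonempty ι] (h : IsMRLS η x z p θ) (t : ℕ) :
    ∑ i, p t i = 1 := by
  simp only [h.weight_eq, sum_gibbsWeight]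

theorem error_eq_sum [NormedSpace ℝ E] [Nonempty ι] (h : IsMRLS η x z p θ)
    (hx : ∀ i, |x i| = 1) (hz : ∀ i, z i = x i • θ₀ + e i) (t : ℕ) :
    θ t - θ₀ = ∑ i, p t i • x i • e i := by
  have hxx (i : ι) : x i * x i = 1 := by rw [← abs_mul_abs_self, hx, one_mul]
  simp only [h.iterate_eq t, hz, smul_add, smul_smul (x _) (x _), hxx, one_smul, sum_add_distrib,
    ← sum_smul, h.sum_weight, add_sub_cancel_left]

theorem one_div_card_le_weight [InnerProductSpace ℝ E] (h : IsMRLS η x z p θ) (hη : 0 ≤ η)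
    (hΔ : 0 ≤ Δ) (hx : ∀ i, |x i| = 1) (hz : ∀ i, z i = x i • θ₀ + e i)
    (he : ∀ i ∈ S, ‖e i‖ = ε) (he₀ : ∀ i ∉ S, e i = 0)
    (hθ : ∀ s < t, ‖θ s - θ₀‖ ≤ (1 / 2 - Δ) * ε) (hi : i ∉ S) :
    1 / (Fintype.card ι : ℝ) ≤ p t i := by
  have hclean {k : ι} (hk : k ∉ S) : z k = x k • θ₀ := by rw [hz, he₀ k hk, add_zero]
  rw [h.weight_eq]
  refine one_div_card_le_gibbsWeight hη fun j => ?_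
  by_cases hj : j ∈ S
  · have hgap := cumulativeLoss_add_le_cumulativeLoss (hx i) (hx j) (hclean hi) (hz j)
      (by rwa [he j hj])
    exact (le_add_of_nonneg_right (by positivity)).trans hgap
  · exact (cumulativeLoss_eq_cumulativeLoss (hx i) (hx j) (hclean hi) (hclean hj)).le

theorem norm_error_le [InnerProductSpace ℝ E] [Nonempty ι] (h : IsMRLS η x z p θ) (hη : 0 ≤ η)
    (hΔ : 0 ≤ Δ) (hε : 0 ≤ ε) (hS : #S ≤ (1 / 2 - Δ) * Fintype.card ι) (hx : ∀ i, |x i| = 1)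
    (hz : ∀ i, z i = x i • θ₀ + e i) (he : ∀ i ∈ S, ‖e i‖ = ε) (he₀ : ∀ i ∉ S, e i = 0) (t : ℕ) :
    ‖θ t - θ₀‖ ≤ (1 / 2 - Δ) * ε := by
  induction t using Nat.strong_induction_on with
  | _ t ih =>
    have hmass : ∑ i ∈ S, p t i ≤ 1 / 2 - Δ := calc
      ∑ i ∈ S, p t i ≤ #S / Fintype.card ι := sum_le_card_div_card (h.sum_weight t) fun _ hi =>
        h.one_div_card_le_weight hη hΔ hx hz he he₀ ih hi
      _ ≤ 1 / 2 - Δ := (div_le_iff₀ (Nat.cast_pos.2 Fintype.card_pos)).2 hS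
    calc ‖θ t - θ₀‖ = ‖∑ i, p t i • x i • e i‖ := by rw [h.error_eq_sum hx hz]
      _ ≤ (∑ i ∈ S, p t i) * ε := by
        refine norm_sum_smul_le_of_eq_zero (fun i _ => ?_) (fun i hi => ?_) fun i hi => ?_
        · rw [h.weight_eq]
          exact gibbsWeight_nonneg _ _ _
        · rw [norm_smul, Real.norm_eq_abs, hx, one_mul, he i hi]
        · rw [he₀ i hi, smul_zero]
      _ ≤ (1 / 2 - Δ) * ε := mul_le_mul_of_nonneg_right hmass hε

end IsMRLS

theorem mr_ls_clean_probability_lower_bound_general [Fintype ι] [InnerProductSpace ℝ E]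
    (hε : 0 ≤ ε) (hΔ : 0 ≤ Δ) (hη : 0 ≤ η) (hσ : σ ≤ 1 / 2 - Δ)
    (hS : (#S : ℝ) = σ * Fintype.card ι) (hx : ∀ i, |x i| = 1)
    (hz : ∀ i, z i = x i • θ₀ + e i) (he : ∀ i ∈ S, ‖e i‖ = ε) (he₀ : ∀ i ∉ S, e i = 0)
    (h : IsMRLS η x z p θ) (t : ℕ) (hi : i ∉ S) :
    1 / ((1 - σ) * Fintype.card ι + σ * Fintype.card ι * exp (-η * ε ^ 2 * Δ * t)) ≤ p t i ∧
      1 / (Fintype.card ι : ℝ) ≤ p t i := by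
  classical
  have : Nonempty ι := ⟨i⟩
  have hclean {k : ι} (hk : k ∉ S) : z k = x k • θ₀ := by rw [hz, he₀ k hk, add_zero]
  have hcompl : (#Sᶜ : ℝ) = (1 - σ) * Fintype.card ι := by
    rw [card_compl, Nat.cast_sub S.card_le_univ, hS, sub_mul, one_mul]
  have herror : ∀ s, ‖θ s - θ₀‖ ≤ (1 / 2 - Δ) * ε :=
    h.norm_error_le hη hΔ hε (hS.trans_le (by gcongr)) hx hz he he₀
  refine ⟨?_, h.one_div_card_le_weight hη hΔ hx hz he he₀ (fun s _ => herror s) hi⟩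
  have hexp : -η * ε ^ 2 * Δ * t = -(η * (ε ^ 2 * Δ * t)) := by ring
  rw [h.weight_eq, ← hcompl, ← hS, hexp]
  refine one_div_le_gibbsWeight_of_gap hη (fun j hj => ?_) fun j hj => ?_
  · exact (cumulativeLoss_eq_cumulativeLoss (hx i) (hx j) (hclean hi) (hclean hj)).le
  · rw [← he j hj]
    refine cumulativeLoss_add_le_cumulativeLoss (hx i) (hx j) (hclean hi) (hz j) fun s _ => ?_
    exact (herror s).trans_eq (by rw [he j hj])

end MRLS

/-- In the noisy linear MR-LS dynamics, every clean example's
probability satisfies p_{t,i} ≥ 1/((1 − σ)N + σN exp(−ηε²Δt)); in particular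
it is at least 1/N (Lemma 6 of the paper). -/
theorem mr_ls_clean_probability_lower_bound
    (N : ℕ) (hN : 1 ≤ N)
    (ε Δ η : ℝ) (hε : 0 < ε) (hΔ0 : 0 < Δ) (hΔ : Δ < 1 / 2) (hη : 0 < η)
    (σ : ℝ) (hσ : σ = 1 / 2 - Δ)
    (Icr : Finset (Fin N)) (hIcr_pos : 0 < Icr.card) (hIcr_card : (Icr.card : ℝ) = σ * N)
    (x y e : Fin N → ℝ)
    (hx : ∀ i, x i = 1 ∨ x i = -1) (hxy : ∀ i, y i = x i)
    (he_cr : ∀ i ∈ Icr, e i = ε ∨ e i = -ε) (he_cl : ∀ i ∉ Icr, e i = 0)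
    (p : ℕ → Fin N → ℝ) (θ : ℕ → ℝ)
    (hp0 : ∀ i, p 0 i = 1 / N)
    (hθ : ∀ t, θ t = ∑ i, p t i * x i * (y i + e i))
    (hp : ∀ t i, p (t + 1) i =
      Real.exp (-η * ∑ s ∈ Finset.range (t + 1), (1 / 2) * (θ s * x i - (y i + e i)) ^ 2) /
        ∑ j, Real.exp (-η * ∑ s ∈ Finset.range (t + 1), (1 / 2) * (θ s * x j - (y j + e j)) ^ 2))
    :
    ∀ t : ℕ, ∀ i ∉ Icr,
      p t i ≥ 1 / ((1 - σ) * N + σ * N * Real.exp (-η * ε ^ 2 * Δ * t)) ∧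
      p t i ≥ 1 / N := by
  have hMRLS : IsMRLS η x (y + e) p θ := .of_real (by simpa using hp0) hθ hp
  have hlabel (i : Fin N) : (y + e) i = x i • (1 : ℝ) + e i := by simp [hxy]
  have hnoise : ∀ i ∈ Icr, ‖e i‖ = ε := fun i hi => (abs_eq hε.le).2 (he_cr i hi)
  intro t i hi
  simpa using mr_ls_clean_probability_lower_bound_general hε.le hΔ0.le hη.le hσ.le
    (by simpa using hIcr_card) (fun i => (abs_eq zero_le_one).2 (hx i)) hlabel hnoise he_cl hMRLS
    t hi
end
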